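/- Let m and p be positive integers and set l = 4mp−1, t = 4mp−2p−1, p' = 2mp−1. Then for every integer k with 1 ≤ k ≤ p': σ_{i_k} + σ_{i_{p'+1−k}} = 2 if k = ap for some odd integer a with 1 ≤ a ≤ 2m−1; σ_{i_k} + σ_{i_{p'+1−k}} = −2 if k = ap for some even integer a with 2 ≤ a ≤ 2m−2; and σ_{i_k} + σ_{i_{p'+1−k}} = 0 if k is not a multiple of p. -/

import Mathlib

open Finset

noncomputable section

/-- The q-Pochhammer symbol `(a; q)_n = ∏_{k=0}^{n-1} (1 - a q^k)`. -/
def qPoch (a q : ℂ) (n : ℕ) : ℂ := ∏ k ∈ Finset.range n, (1 - a * q ^ k)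

/-- The Gaussian binomial coefficient `[n; k]_q` as a polynomial in `q` over `ℤ`,
defined by the q-Pascal rule `[n; k] = [n-1; k-1] + q^k [n-1; k]`.  It is the
polynomial equal to `(q;q)_n / ((q;q)_{n-k} (q;q)_k)`. -/
def gaussPoly : ℕ → ℕ → Polynomial ℤ
  | _, 0 => 1
  | 0, _ + 1 => 0
  | n + 1, k + 1 => gaussPoly n k + Polynomial.X ^ (k + 1) * gaussPoly n (k + 1)

/-- The Gaussian binomial coefficient `[n; k]_q` evaluated at `q : ℂ`. -/
def gbin (q : ℂ) (n k : ℕ) : ℂ := Polynomial.aeval q (gaussPoly n k)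

/-- `σ_j = (-1)^⌊(2j-1)t/l⌋`. -/
def sigmaT (l t j : ℕ) : ℤ := (-1) ^ ((2 * j - 1) * t / l)

/-- `r(j)`: the unique integer with `r(j) ≡ (2j-1)t (mod 2l)` and `-l < r(j) < l`. -/
def rT (l t j : ℕ) : ℤ :=
  if (((2 * j - 1) * t % (2 * l) : ℕ) : ℤ) < (l : ℤ) then (((2 * j - 1) * t % (2 * l) : ℕ) : ℤ)
  else (((2 * j - 1) * t % (2 * l) : ℕ) : ℤ) - 2 * (l : ℤ)

/-- `r'(j) = (|r(j)| + 1)/2`. -/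
def rpT (l t j : ℕ) : ℕ := ((rT l t j).natAbs + 1) / 2

open Classical in
/-- `i_k`: the unique `j ∈ {1, …, (l-1)/2}` with `r'(j) = k`. -/
def iT (l t k : ℕ) : ℕ :=
  if h : ∃ j, j ∈ Finset.Icc 1 ((l - 1) / 2) ∧ rpT l t j = k then h.choose else 0

/-- `ε_{i,j,m}`: `1` if `j ≡ -i, -i-1 (mod 2m)`, `-1` if `j ≡ i, i-1 (mod 2m)`,
`0` otherwise (and `0` when `m ∣ i`, a case excluded in all uses). -/
def epsLO (m i j : ℕ) : ℤ :=
  if m ∣ i then 0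
  else if 2 * m ∣ (i + j) ∨ 2 * m ∣ (i + j + 1) then 1
  else if (2 * (m : ℤ)) ∣ ((j : ℤ) - (i : ℤ)) ∨ (2 * (m : ℤ)) ∣ ((j : ℤ) - (i : ℤ) + 1) then -1
  else 0

/-- `Δ_{i,j,m}`: `1` if `j ≡ -i, -i+1 (mod 2m)`, `-1` if `j ≡ i, i+1 (mod 2m)`,
`0` otherwise (and `0` when `m ∣ i`, a case excluded in all uses). -/
def deltaLO (m i j : ℕ) : ℤ :=
  if m ∣ i then 0
  else if 2 * m ∣ (i + j) ∨ 2 * m ∣ (i + j - 1) then 1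
  else if (2 * (m : ℤ)) ∣ ((j : ℤ) - (i : ℤ)) ∨ (2 * (m : ℤ)) ∣ ((j : ℤ) - (i : ℤ) - 1) then -1
  else 0

/-- `γ_{i,m} = 1` if `i ≡ 1, …, m-1 (mod 2m)` and `-1` otherwise. -/
def gamLO (m i : ℕ) : ℤ :=
  if 1 ≤ i % (2 * m) ∧ i % (2 * m) ≤ m - 1 then 1 else -1

/-- `β_{i,m} = 1` if `i ≡ 1, …, m-1 (mod 2m)`, `-1` if `i ≡ m+1, …, 2m-1 (mod 2m)`,
and `0` if `m ∣ i`. -/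
def betLO (m i : ℕ) : ℤ :=
  if 1 ≤ i % (2 * m) ∧ i % (2 * m) ≤ m - 1 then 1
  else if m + 1 ≤ i % (2 * m) ∧ i % (2 * m) ≤ 2 * m - 1 then -1
  else 0

/-- Extend a tuple `f : Fin P → Fin N` to `n : ℕ → ℕ` with `n i = f (i-1)` for
`1 ≤ i ≤ P` and `n i = 0` otherwise (in particular `n 0 = 0`). -/
def extTup (P N : ℕ) (f : Fin P → Fin N) : ℕ → ℕ :=
  fun i => if h : 1 ≤ i ∧ i ≤ P then (f ⟨i - 1, by omega⟩ : ℕ) else 0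

/-- Takata's exponent `a(n)` (an integer; every integer division below is exact). -/
def aT (l t : ℕ) (n : ℕ → ℕ) : ℤ :=
  -(∑ j ∈ Icc 1 ((l - 1) / 2), (∑ k ∈ Icc (rpT l t j) ((l - 1) / 2),
      (sigmaT l t (iT l t k) + sigmaT l t (iT l t ((l - 1) / 2 + 1 - k))) / 2) *
      ((n j : ℤ) - (n (j - 1) : ℤ)))
  - ∑ j ∈ Icc 1 ((l - 1) / 2 - 1), ((sigmaT l t (j + 1) + sigmaT l t ((l - 1) / 2 + 1 - j)) / 2) * (n j : ℤ)
  - ((sigmaT l t ((l - 1) / 2) + 1) / 2) * (n ((l - 1) / 2) : ℤ)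
  - ∑ j ∈ Icc 1 ((l - 1) / 2), sigmaT l t j

/-- Takata's exponent `b₁(n)` (an integer; every integer division below is exact
whenever the factor it multiplies is nonzero). -/
def b1T (l t : ℕ) (n : ℕ → ℕ) : ℤ :=
  -aT l t n
  + ∑ k ∈ Icc 1 ((l - t) / 2), ((1 - sigmaT l t (iT l t k)) / 2) * (n (iT l t k - 1) : ℤ)
  - ∑ k ∈ Icc ((l - t) / 2 + 1) ((l - 1) / 2), (n (iT l t k - 1) : ℤ)
  + ∑ k ∈ Icc ((l - t) / 2 + 1) ((l - 1) / 2), ((1 + sigmaT l t (iT l t k)) / 2) * (n (iT l t k) : ℤ)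
  - (1 + sigmaT l t ((l - 1) / 2)) * (n ((l - 1) / 2) : ℤ)
  + ∑ j ∈ Icc 1 ((l - 1) / 2 - 1), ((sigmaT l t (j + 1) - sigmaT l t j) / 2) * (n j : ℤ)
  - ∑ k ∈ Icc 1 ((l - 1) / 2 - 1), ∑ k' ∈ Icc (k + 1) ((l - 1) / 2),
      ((1 + Int.sign ((iT l t k : ℤ) - (iT l t k' : ℤ))) / 2) *
        ((sigmaT l t (iT l t k) - sigmaT l t (iT l t k')) / 2) *
        ((n (iT l t k) : ℤ) - (n (iT l t k - 1) : ℤ)) *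
        ((n (iT l t k') : ℤ) - (n (iT l t k' - 1) : ℤ))
  + ∑ j ∈ Icc 1 ((l - 1) / 2), sigmaT l t j *
      (∑ k ∈ Icc 1 (rpT l t j), ((n (iT l t k) : ℤ) - (n (iT l t k - 1) : ℤ))) * (n (j - 1) : ℤ)

/-- Takata's exponent `b₂(n)`. -/
def b2T (l t : ℕ) (n : ℕ → ℕ) : ℤ :=
  if l < 2 * t then
    ∑ k ∈ Icc ((l - t) / 2 + 1) ((t - 1) / 2),
      ((1 + sigmaT l t (iT l t k)) / 2) * (n (iT l t k - 1) : ℤ)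
  else
    -∑ k ∈ Icc ((t + 1) / 2 + 1) ((l - t) / 2),
      ((1 + sigmaT l t (iT l t k)) / 2) * (n (iT l t k - 1) : ℤ)

/-- Takata's `κ(p')`. -/
def kapT (l t N : ℕ) (n : ℕ → ℕ) : ℤ :=
  if sigmaT l t ((l - 1) / 2) = -1 then -(N : ℤ) * (n ((l - 1) / 2) : ℤ) else 0

/-- Takata's `τ(j)`. -/
def tauT (l t : ℕ) (q : ℂ) (n : ℕ → ℕ) (j : ℕ) : ℂ :=
  if sigmaT l t j = -1 then (-1 : ℂ) ^ (n j - n (j - 1))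
  else q ^ ((((n j : ℤ) - (n (j - 1) : ℤ)) * (((n j : ℤ) - (n (j - 1) : ℤ)) + 1)) / 2)

/-- Takata's `X(n)`. -/
def XT (l t N : ℕ) (q : ℂ) (n : ℕ → ℕ) : ℂ :=
  (-1 : ℂ) ^ (n ((l - 1) / 2)) * q ^ kapT l t N n *
    (qPoch q q (N - 1) * qPoch q q (n ((l - 1) / 2)) / qPoch q q (N - n ((l - 1) / 2) - 1)) *
    ∏ j ∈ Icc 1 ((l - 1) / 2), tauT l t q n j / qPoch q q (n j - n (j - 1))

/-!
Since `σ_j = sign r(j)` and `|r(j)| = 2r'(j) - 1`, the congruence defining `r(j)` reads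
`(2j-1)t ≡ σ_j (2r'(j) - 1) (mod 2l)`, and it determines both `σ_j` and `r'(j)`.  Multiplying it
by an inverse `t'` of `t` modulo `2l` exchanges the roles of `j` and `r'(j)`, so that
`i_k` and `σ_(i_k)` are the `r'(k)` and `σ_k` of the pair `(l, t')`.

Here `l = 4mp-1` and `t = l - 2p` has the inverse `t' = l - 2m` modulo `2l`, whose signs are
`σ_k = (-1)^⌊(k-1)/p⌋`.  Hence
`σ_(i_k) + σ_(i_(2mp-k)) = (-1)^⌊(k-1)/p⌋ - (-1)^⌊k/p⌋`, and the exponents agree unless `p ∣ k`.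
-/

section Residue

variable {l t j : ℕ}

lemma rT_modEq (l t j : ℕ) : rT l t j ≡ ((2 * j - 1) * t : ℕ) [ZMOD 2 * l] := by
  rw [rT]
  push_cast
  split_ifs
  · exact Int.mod_modEq _ _
  · exact (Int.modEq_sub_modulus_iff.mpr .rfl).symm.trans (Int.mod_modEq _ _)

lemma sigmaT_mul_abs_rT (l t j : ℕ) : sigmaT l t j * |rT l t j| = rT l t j := by
  rcases l.eq_zero_or_pos with rfl | hl
  · simp [sigmaT, rT, abs_mul]
  have hlt := Nat.mod_lt ((2 * j - 1) * t) hl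
  have hmod := Nat.mod_mul (x := (2 * j - 1) * t) (a := l) (b := 2)
  rw [mul_comm l 2] at hmod
  rw [sigmaT, rT, hmod]
  rcases Nat.even_or_odd ((2 * j - 1) * t / l) with hq | hq
  · rw [hq.neg_one_pow, Nat.even_iff.mp hq, mul_zero, add_zero, if_pos (by omega), one_mul,
      Nat.abs_cast]
  · rw [hq.neg_one_pow, Nat.odd_iff.mp hq, mul_one, if_neg (by omega),
      abs_of_nonpos (by omega), neg_one_mul, neg_neg]

lemma abs_rT_le (hl : 0 < l) : |rT l t j| ≤ l := by
  have := Nat.mod_lt ((2 * j - 1) * t) (Nat.mul_pos two_pos hl)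
  rw [rT, abs_le]
  split_ifs <;> omega

lemma odd_rT (ht : Odd t) (hj : 1 ≤ j) : Odd (rT l t j) := by
  have hodd : Odd (((2 * j - 1) * t : ℕ) : ℤ) :=
    (Int.odd_coe_nat _).mpr (Odd.mul ⟨j - 1, by omega⟩ ht)
  rw [Int.odd_iff] at hodd ⊢
  rwa [(rT_modEq l t j).of_mul_right _]

lemma abs_rT_eq_two_mul_rpT_sub_one (ht : Odd t) (hj : 1 ≤ j) : |rT l t j| = 2 * rpT l t j - 1 := by
  obtain ⟨x, hx⟩ := Int.natAbs_odd.mpr (odd_rT (l := l) ht hj)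
  rw [rpT, Int.abs_eq_natAbs]
  omega

lemma rT_eq_sigmaT_mul (ht : Odd t) (hj : 1 ≤ j) :
    rT l t j = sigmaT l t j * (2 * rpT l t j - 1) := by
  rw [← abs_rT_eq_two_mul_rpT_sub_one ht hj, sigmaT_mul_abs_rT]

lemma sigmaT_mul_self (l t j : ℕ) : sigmaT l t j * sigmaT l t j = 1 := by
  rw [sigmaT, ← mul_pow, neg_one_mul, neg_neg, one_pow]

lemma abs_sigmaT (l t j : ℕ) : |sigmaT l t j| = 1 :=
  abs_neg_one_pow _

lemma rT_eq_of_modEq {r : ℤ} (h : r ≡ ((2 * j - 1) * t : ℕ) [ZMOD 2 * l]) (hr : |r| < l) :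
    rT l t j = r := by
  have hl : 0 < l := by exact_mod_cast (abs_nonneg r).trans_lt hr
  have hdist : |rT l t j - r| < 2 * l := by
    linarith [abs_sub (rT l t j) r, abs_rT_le (t := t) (j := j) hl]
  exact sub_eq_zero.mp <|
    Int.eq_zero_of_abs_lt_dvd (h.trans (rT_modEq l t j).symm).dvd hdist

lemma abs_rT_eq_of_rT_eq {ε : ℤ} {k : ℕ} (hε : |ε| = 1) (hk : 1 ≤ k)
    (h : rT l t j = ε * (2 * k - 1)) : |rT l t j| = 2 * k - 1 := by
  rw [h, abs_mul, hε, one_mul, abs_of_nonneg (by omega)]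

lemma rpT_eq_of_rT_eq {ε : ℤ} {k : ℕ} (hε : |ε| = 1) (hk : 1 ≤ k)
    (h : rT l t j = ε * (2 * k - 1)) : rpT l t j = k := by
  have habs := abs_rT_eq_of_rT_eq hε hk h
  rw [Int.abs_eq_natAbs] at habs
  rw [rpT]
  omega

lemma sigmaT_eq_of_rT_eq {ε : ℤ} {k : ℕ} (hε : |ε| = 1) (hk : 1 ≤ k)
    (h : rT l t j = ε * (2 * k - 1)) : sigmaT l t j = ε := by
  have hσ := sigmaT_mul_abs_rT l t j
  rw [abs_rT_eq_of_rT_eq hε hk h, h] at hσ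
  exact mul_right_cancel₀ (by omega) hσ

lemma rpT_mem_Icc (hl : Odd l) (htl : t.Coprime (2 * l))
    (hj : j ∈ Icc 1 ((l - 1) / 2)) : rpT l t j ∈ Icc 1 ((l - 1) / 2) := by
  rw [mem_Icc] at hj ⊢
  have ht : Odd t := htl.coprime_mul_right_right.odd_of_right
  have habs := abs_rT_eq_two_mul_rpT_sub_one (l := l) ht hj.1
  have hne : |rT l t j| ≠ l := by
    intro hr
    have hdvd : (l : ℤ) ∣ ((2 * j - 1) * t : ℕ) :=
      ((rT_modEq l t j).of_mul_left 2).dvd_iff.mp ((dvd_abs _ _).mp hr.symm.dvd)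
    have hdvd' : l ∣ 2 * j - 1 :=
      htl.coprime_mul_left_right.symm.dvd_of_dvd_mul_right (Int.natCast_dvd_natCast.mp hdvd)
    have := Nat.le_of_dvd (by omega) hdvd'
    omega
  have hle := abs_rT_le (t := t) (j := j) hl.pos
  have := abs_nonneg (rT l t j)
  obtain ⟨n, rfl⟩ := hl
  omega

end Residue

section Inverse

variable {l t t' k : ℕ}

lemma rT_rpT (h : t * t' ≡ 1 [MOD 2 * l]) (hk : k ∈ Icc 1 ((l - 1) / 2)) :
    rT l t (rpT l t' k) = sigmaT l t' k * (2 * k - 1) := by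
  obtain ⟨hk, hkl⟩ := mem_Icc.mp hk
  have htl' : t'.Coprime (2 * l) := Nat.coprime_of_mul_modEq_one t (mul_comm t t' ▸ h)
  have ht' : Odd t' := htl'.coprime_mul_right_right.odd_of_right
  have hj : 1 ≤ rpT l t' k := by
    have := abs_rT_eq_two_mul_rpT_sub_one (l := l) ht' hk
    have := abs_nonneg (rT l t' k)
    omega
  have hr := rT_eq_sigmaT_mul (l := l) ht' hk
  refine rT_eq_of_modEq ?_ ?_
  · have hinv : (t * t' : ℤ) ≡ 1 [ZMOD 2 * l] := by exact_mod_cast Int.natCast_modEq_iff.mpr h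
    have hcong := rT_modEq l t' k
    push_cast [show 1 ≤ 2 * k by omega, show 1 ≤ 2 * rpT l t' k by omega] at hcong ⊢
    calc sigmaT l t' k * (2 * k - 1)
        ≡ sigmaT l t' k * (2 * k - 1) * (t * t') [ZMOD 2 * l] := by
          simpa using (hinv.mul_left (sigmaT l t' k * (2 * k - 1))).symm
      _ = sigmaT l t' k * t * ((2 * k - 1) * t') := by ring
      _ ≡ sigmaT l t' k * t * rT l t' k [ZMOD 2 * l] := hcong.symm.mul_left _
      _ = (2 * rpT l t' k - 1) * t := by
          rw [hr]
          linear_combination (2 * rpT l t' k - 1) * t * sigmaT_mul_self l t' k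
  · rw [abs_mul, abs_sigmaT, one_mul, abs_of_nonneg (by omega)]
    omega

lemma rpT_rpT (h : t * t' ≡ 1 [MOD 2 * l]) (hk : k ∈ Icc 1 ((l - 1) / 2)) :
    rpT l t (rpT l t' k) = k :=
  rpT_eq_of_rT_eq (abs_sigmaT l t' k) (mem_Icc.mp hk).1 (rT_rpT h hk)

lemma sigmaT_rpT (h : t * t' ≡ 1 [MOD 2 * l]) (hk : k ∈ Icc 1 ((l - 1) / 2)) :
    sigmaT l t (rpT l t' k) = sigmaT l t' k :=
  sigmaT_eq_of_rT_eq (abs_sigmaT l t' k) (mem_Icc.mp hk).1 (rT_rpT h hk)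

lemma iT_spec (h : ∃ j, j ∈ Icc 1 ((l - 1) / 2) ∧ rpT l t j = k) :
    iT l t k ∈ Icc 1 ((l - 1) / 2) ∧ rpT l t (iT l t k) = k := by
  rw [iT, dif_pos h]
  exact h.choose_spec

lemma iT_eq_rpT (hl : Odd l) (h : t * t' ≡ 1 [MOD 2 * l]) (hk : k ∈ Icc 1 ((l - 1) / 2)) :
    iT l t k = rpT l t' k := by
  have h' : t' * t ≡ 1 [MOD 2 * l] := mul_comm t t' ▸ h
  have hj := rpT_mem_Icc hl (Nat.coprime_of_mul_modEq_one t h') hk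
  obtain ⟨hi, hik⟩ := iT_spec ⟨_, hj, rpT_rpT h hk⟩
  rw [← rpT_rpT h' hi, hik]

lemma sigmaT_iT (hl : Odd l) (h : t * t' ≡ 1 [MOD 2 * l]) (hk : k ∈ Icc 1 ((l - 1) / 2)) :
    sigmaT l t (iT l t k) = sigmaT l t' k := by
  rw [iT_eq_rpT hl h hk, sigmaT_rpT h hk]

end Inverse

lemma sigmaT_sub {l s k : ℕ} (hk : 1 ≤ k) (hs : 0 < s) (hsl : s ≤ l) :
    sigmaT l (l - s) k = (-1) ^ (((2 * k - 1) * s - 1) / l) := by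
  have hpos : 0 < (2 * k - 1) * s := Nat.mul_pos (by omega) hs
  have hle : (2 * k - 1) * s ≤ l * (2 * k - 1) := by
    rw [mul_comm]
    exact Nat.mul_le_mul_right _ hsl
  have hfloor :
      (2 * k - 1) * (l - s) / l = 2 * k - 1 - (((2 * k - 1) * s - 1) / l + 1) := by
    rw [← Nat.mul_sub_div _ _ _ (by omega), Nat.sub_add_cancel hpos, Nat.mul_sub,
      mul_comm l]
  have hq : ((2 * k - 1) * s - 1) / l < 2 * k - 1 := Nat.div_lt_of_lt_mul (by omega)
  rw [sigmaT, hfloor]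
  exact neg_one_pow_congr (by grind)

lemma two_mul_sub_one_mul_sub_one_div {M p k : ℕ} (hk : 1 ≤ k) (hkM : k ≤ M * p) :
    ((2 * k - 1) * M - 1) / (2 * M * p - 1) = (k - 1) / p := by
  have hp : 0 < p := Nat.pos_of_ne_zero (by rintro rfl; omega)
  obtain ⟨b, c, hc, rfl⟩ : ∃ b c, c < p ∧ k = p * b + c + 1 :=
    ⟨(k - 1) / p, (k - 1) % p, Nat.mod_lt _ hp, by rw [Nat.div_add_mod]; omega⟩
  have hb : b < M := Nat.lt_of_mul_lt_mul_left (a := p) (by rw [mul_comm p M]; omega)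
  -- Writing `p = c + d + 1` and `M = b + e + 1` makes quotient and remainder subtraction-free.
  obtain ⟨d, rfl⟩ := Nat.exists_eq_add_of_lt hc
  obtain ⟨e, rfl⟩ := Nat.exists_eq_add_of_lt hb
  have hden : 2 * (b + e + 1) * (c + d + 1) - 1
      = 2 * c * (b + e + 1) + 2 * b + e + (2 * d * (b + e + 1) + e + 1) :=
    Nat.sub_eq_of_eq_add (by ring)
  have hnum : (2 * ((c + d + 1) * b + c + 1) - 1) * (b + e + 1) - 1
      = (2 * (b + e + 1) * (c + d + 1) - 1) * b + (2 * c * (b + e + 1) + 2 * b + e) := by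
    rw [hden, show 2 * ((c + d + 1) * b + c + 1) - 1 = 2 * ((c + d + 1) * b + c) + 1 by omega]
    exact Nat.sub_eq_of_eq_add (by ring)
  rw [hnum, Nat.mul_add_div (by omega), Nat.div_eq_of_lt (by omega), Nat.add_sub_cancel,
    Nat.mul_add_div hp, Nat.div_eq_of_lt hc]

lemma sub_mul_sub_modEq_one {l m p : ℕ} (h : l + 1 = 4 * m * p) :
    (l - 2 * p) * (l - 2 * m) ≡ 1 [MOD 2 * l] := by
  have hm0 : m ≠ 0 := by rintro rfl; omega
  have hp0 : p ≠ 0 := by rintro rfl; omega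
  have hm : 2 * m ≤ l := by
    have := Nat.mul_le_mul_left (4 * m) (Nat.one_le_iff_ne_zero.mpr hp0)
    omega
  have hp : 2 * p ≤ l := by
    have := Nat.mul_le_mul_right p (Nat.mul_le_mul_left 4 (Nat.one_le_iff_ne_zero.mpr hm0))
    omega
  rw [← Int.natCast_modEq_iff]
  push_cast [hm, hp]
  zify at h
  refine (Int.modEq_iff_dvd.mpr ⟨2 * m * p - m - p, ?_⟩).symm
  linear_combination (l - 1) * h

lemma sigmaT_iT_eq_neg_one_pow {m p k : ℕ} (hk : 1 ≤ k) (hkmp : k < 2 * m * p) :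
    sigmaT (4 * m * p - 1) (4 * m * p - 2 * p - 1)
      (iT (4 * m * p - 1) (4 * m * p - 2 * p - 1) k) = (-1) ^ ((k - 1) / p) := by
  have hl : 4 * m * p = 2 * (2 * m * p) := by ring
  have hm : 0 < 2 * m := Nat.pos_of_ne_zero fun h => by simp [h] at hkmp
  have hp : 0 < p := Nat.pos_of_ne_zero (by rintro rfl; omega)
  have hml : 2 * m ≤ 2 * m * p := Nat.le_mul_of_pos_right _ hp
  have hodd : Odd (4 * m * p - 1) := ⟨2 * m * p - 1, by omega⟩
  have hinv := sub_mul_sub_modEq_one (l := 4 * m * p - 1) (m := m) (p := p) (by omega)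
  rw [Nat.sub_right_comm, sigmaT_iT hodd hinv (mem_Icc.mpr ⟨hk, by omega⟩),
    sigmaT_sub hk (by omega) (by omega), show 4 * m * p = 2 * (2 * m) * p by ring,
    two_mul_sub_one_mul_sub_one_div hk hkmp.le]

lemma sigmaT_iT_add_sigmaT_iT {m p k : ℕ} (hk : 1 ≤ k) (hkmp : k < 2 * m * p) :
    sigmaT (4 * m * p - 1) (4 * m * p - 2 * p - 1)
        (iT (4 * m * p - 1) (4 * m * p - 2 * p - 1) k)
      + sigmaT (4 * m * p - 1) (4 * m * p - 2 * p - 1)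
        (iT (4 * m * p - 1) (4 * m * p - 2 * p - 1) (2 * m * p - k))
      = (-1) ^ ((k - 1) / p) - (-1) ^ (k / p) := by
  have hq : k / p < 2 * m := Nat.div_lt_of_lt_mul (by rwa [mul_comm])
  have hreflect : (2 * m * p - k - 1) / p = 2 * m - (k / p + 1) := by
    rw [← Nat.mul_sub_div _ _ _ (by rwa [mul_comm]), mul_comm p, Nat.sub_sub]
  have hparity : (-1 : ℤ) ^ (2 * m - (k / p + 1)) = -(-1) ^ (k / p) := by
    rw [← neg_one_mul ((-1 : ℤ) ^ (k / p)), ← pow_succ']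
    exact neg_one_pow_congr (by grind)
  rw [sigmaT_iT_eq_neg_one_pow hk hkmp, sigmaT_iT_eq_neg_one_pow (by omega) (by omega),
    hreflect, hparity, sub_eq_add_neg]

lemma neg_one_pow_pred_mul_div_sub {a p : ℕ} (ha : 1 ≤ a) (hp : 0 < p) :
    (-1 : ℤ) ^ ((a * p - 1) / p) - (-1) ^ (a * p / p) = -2 * (-1) ^ a := by
  obtain ⟨a, rfl⟩ := Nat.exists_eq_add_of_le' ha
  have hpred : ((a + 1) * p - 1) / p = a := by
    have := Nat.mul_sub_div 0 p (a + 1) (by positivity)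
    rwa [mul_comm, Nat.zero_div] at this
  rw [hpred, Nat.mul_div_cancel _ hp]
  ring

/-- Lemma 2.3(i): for `l = 4mp-1`, `t = 4mp-2p-1`, `p' = 2mp-1`, the value of
`σ_(i_k) + σ_(i_(p'+1-k))`. -/
theorem sigma_iT_sum_neg_neg
    (m p k : ℕ) (hm : 0 < m) (hp : 0 < p)
    (hk1 : 1 ≤ k) (hk2 : k ≤ 2 * m * p - 1) :
    ((∃ a, Odd a ∧ 1 ≤ a ∧ a ≤ 2 * m - 1 ∧ k = a * p) →
      sigmaT (4 * m * p - 1) (4 * m * p - 2 * p - 1) (iT (4 * m * p - 1) (4 * m * p - 2 * p - 1) k)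
        + sigmaT (4 * m * p - 1) (4 * m * p - 2 * p - 1) (iT (4 * m * p - 1) (4 * m * p - 2 * p - 1) (2 * m * p - k)) = 2) ∧
    ((∃ a, Even a ∧ 2 ≤ a ∧ a ≤ 2 * m - 2 ∧ k = a * p) →
      sigmaT (4 * m * p - 1) (4 * m * p - 2 * p - 1) (iT (4 * m * p - 1) (4 * m * p - 2 * p - 1) k)
        + sigmaT (4 * m * p - 1) (4 * m * p - 2 * p - 1) (iT (4 * m * p - 1) (4 * m * p - 2 * p - 1) (2 * m * p - k)) = -2) ∧
    (¬ p ∣ k →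
      sigmaT (4 * m * p - 1) (4 * m * p - 2 * p - 1) (iT (4 * m * p - 1) (4 * m * p - 2 * p - 1) k)
        + sigmaT (4 * m * p - 1) (4 * m * p - 2 * p - 1) (iT (4 * m * p - 1) (4 * m * p - 2 * p - 1) (2 * m * p - k)) = 0) := by
  rw [sigmaT_iT_add_sigmaT_iT hk1 (by omega)]
  refine ⟨?_, ?_, fun hpk => ?_⟩
  · rintro ⟨a, ha, ha1, -, rfl⟩
    rw [neg_one_pow_pred_mul_div_sub ha1 hp, ha.neg_one_pow]
    norm_num
  · rintro ⟨a, ha, ha2, -, rfl⟩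
    rw [neg_one_pow_pred_mul_div_sub (by omega) hp, ha.neg_one_pow]
    norm_num
  · obtain ⟨n, rfl⟩ := Nat.exists_eq_add_of_le' hk1
    rw [Nat.succ_div_of_not_dvd hpk, Nat.add_sub_cancel, sub_self]

end
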